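/- arXiv:1710.10950 — 5 statements merged into one kernel-verified Lean document; each statement's English description precedes it below -/
import Mathlib

section
/- Let g be a finite-dimensional real Lie algebra with an abelian complex structure J. For every m ≥ 0, the subspace g_J^m = g^m + J(g^m), where g^m is the m-th term of the lower central series, satisfies [g_J^m, g] ⊆ g^{m+1}; in particular each g_J^m is a J-invariant ideal of g, and these ideals form a decreasing filtration g = g_J^0 ⊇ g_J^1 ⊇ g_J^2 ⊇ ⋯. -/
open scoped TensorProduct

noncomputable section

/-- The `c`-eigenspace of the ℂ-linear extension of `J` on the complexification `ℂ ⊗[ℝ] g`. -/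
def eig (g : Type) [LieRing g] [LieAlgebra ℝ g] (J : g →ₗ[ℝ] g) (c : ℂ) :
    Submodule ℂ (ℂ ⊗[ℝ] g) where
  carrier := {x | J.baseChange ℂ x = c • x}
  add_mem' := by
    intro a b ha hb
    simp only [Set.mem_setOf_eq, map_add] at *
    rw [ha, hb, smul_add]
  zero_mem' := by simp
  smul_mem' := by
    intro t x hx
    simp only [Set.mem_setOf_eq, map_smul] at *
    rw [hx, smul_comm]

/-- The lower central series: `lcs g 0 = g`, `lcs g (m+1) = [lcs g m, g]`. -/
def lcs (g : Type) [LieRing g] [LieAlgebra ℝ g] : ℕ → Submodule ℝ g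
  | 0 => ⊤
  | m + 1 => Submodule.span ℝ {x : g | ∃ a ∈ lcs g m, ∃ b : g, ⁅a, b⁆ = x}

/-- `g_J^m = g^m + J(g^m)`. -/
def gJ (g : Type) [LieRing g] [LieAlgebra ℝ g] (J : g →ₗ[ℝ] g) (m : ℕ) : Submodule ℝ g :=
  lcs g m ⊔ Submodule.map J (lcs g m)

/-- Complexification of a real subspace of `g`, inside `ℂ ⊗[ℝ] g`. -/
def cxS (g : Type) [LieRing g] [LieAlgebra ℝ g] (p : Submodule ℝ g) :
    Submodule ℂ (ℂ ⊗[ℝ] g) := p.baseChange ℂ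

/-- `g_J^{m,(1,0)}`. -/
def gJ10 (g : Type) [LieRing g] [LieAlgebra ℝ g] (J : g →ₗ[ℝ] g) (m : ℕ) :
    Submodule ℂ (ℂ ⊗[ℝ] g) := cxS g (gJ g J m) ⊓ eig g J Complex.I

/-- `g_J^{m,(0,1)}`. -/
def gJ01 (g : Type) [LieRing g] [LieAlgebra ℝ g] (J : g →ₗ[ℝ] g) (m : ℕ) :
    Submodule ℂ (ℂ ⊗[ℝ] g) := cxS g (gJ g J m) ⊓ eig g J (-Complex.I)

/-- The center of `g`, as a submodule. -/
def centerS (g : Type) [LieRing g] [LieAlgebra ℝ g] : Submodule ℝ g where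
  carrier := {A | ∀ B : g, ⁅A, B⁆ = 0}
  add_mem' := by
    intro a b ha hb B
    rw [add_lie, ha B, hb B, add_zero]
  zero_mem' := fun B => zero_lie B
  smul_mem' := by
    intro c a ha B
    rw [smul_lie, ha B, smul_zero]

/-- Complex conjugation on the complexification `ℂ ⊗[ℝ] g` (an ℝ-linear map). -/
def conjC (g : Type) [AddCommGroup g] [Module ℝ g] :
    ℂ ⊗[ℝ] g →ₗ[ℝ] ℂ ⊗[ℝ] g :=
  LinearMap.rTensor g Complex.conjAe.toLinearMap

/-!
Applying `[JA, JB] = [A, B]` to `JA` in place of `A` gives `[JA, B] = -[A, JB]`. Hence `J` can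
always be moved to the second argument of a bracket, where all of `g` is allowed anyway, and adding
`J(g^m)` to `g^m` produces no brackets outside `g^{m+1}`.
-/

theorem lie_apply_left_eq_neg_lie_apply_right {L : Type*} [LieRing L] {J : L → L}
    (hJ2 : ∀ v, J (J v) = -v) (hab : ∀ A B, ⁅J A, J B⁆ = ⁅A, B⁆) (A B : L) :
    ⁅J A, B⁆ = -⁅A, J B⁆ := by
  rw [← hab (J A) B, hJ2, neg_lie]

theorem lie_mem_of_mem_sup_map {R L : Type*} [Ring R] [LieRing L] [Module R L]
    {J : L →ₗ[R] L} (hJ : ∀ A B, ⁅J A, B⁆ = -⁅A, J B⁆) {p q : Submodule R L}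
    (hpq : ∀ x ∈ p, ∀ y, ⁅x, y⁆ ∈ q) {x : L} (hx : x ∈ p ⊔ p.map J) (y : L) :
    ⁅x, y⁆ ∈ q := by
  obtain ⟨a, ha, _, ⟨c, hc, rfl⟩, rfl⟩ := Submodule.mem_sup.mp hx
  rw [add_lie, hJ]
  exact q.add_mem (hpq a ha y) (q.neg_mem (hpq c hc (J y)))

theorem sup_map_mem_invtSubmodule {R M : Type*} [Semiring R] [AddCommMonoid M] [Module R M]
    {f : Module.End R M} {p : Submodule R M} (hp : p ∈ (f ^ 2).invtSubmodule) :
    p ⊔ p.map f ∈ f.invtSubmodule := by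
  rw [Module.End.mem_invtSubmodule_iff_map_le] at hp ⊢
  rw [sq, Module.End.mul_eq_comp, Submodule.map_comp] at hp
  rw [Submodule.map_sup]
  exact sup_le le_sup_right (hp.trans le_sup_left)

section LowerCentralSeries

variable {g : Type} [LieRing g] [LieAlgebra ℝ g]

theorem lie_mem_lcs_succ {m : ℕ} {x : g} (hx : x ∈ lcs g m) (y : g) : ⁅x, y⁆ ∈ lcs g (m + 1) :=
  Submodule.subset_span ⟨x, hx, y, rfl⟩

variable (g) in
theorem lcs_eq_lowerCentralSeries (m : ℕ) :
    lcs g m = (LieModule.lowerCentralSeries ℝ g g m).toSubmodule := by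
  induction m with
  | zero => rfl
  | succ m ih =>
    rw [LieModule.lowerCentralSeries_succ, LieSubmodule.lie_comm,
      LieSubmodule.lieIdeal_oper_eq_linear_span', lcs, ih]
    simp only [LieSubmodule.mem_toSubmodule, LieSubmodule.mem_top, true_and]

variable (g) in
theorem lcs_antitone : Antitone (lcs g) := fun m n hmn => by
  rw [lcs_eq_lowerCentralSeries, lcs_eq_lowerCentralSeries, LieSubmodule.toSubmodule_le_toSubmodule]
  exact LieModule.antitone_lowerCentralSeries ℝ g g hmn

theorem gJ_antitone (J : g →ₗ[ℝ] g) : Antitone (gJ g J) := fun _ _ hmn =>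
  sup_le_sup (lcs_antitone g hmn) (Submodule.map_mono (lcs_antitone g hmn))

theorem gJ_mem_invtSubmodule {J : g →ₗ[ℝ] g} (hJ2 : ∀ v, J (J v) = -v) (m : ℕ) :
    gJ g J m ∈ Module.End.invtSubmodule J :=
  sup_map_mem_invtSubmodule fun x hx => by
    simpa only [sq, Submodule.mem_comap, Module.End.mul_apply, hJ2] using (lcs g m).neg_mem hx

theorem lie_mem_lcs_succ_of_mem_gJ {J : g →ₗ[ℝ] g} (hJ2 : ∀ v, J (J v) = -v)
    (hab : ∀ A B, ⁅J A, J B⁆ = ⁅A, B⁆) {m : ℕ} {x : g} (hx : x ∈ gJ g J m) (y : g) :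
    ⁅x, y⁆ ∈ lcs g (m + 1) :=
  lie_mem_of_mem_sup_map (lie_apply_left_eq_neg_lie_apply_right hJ2 hab)
    (fun _ => lie_mem_lcs_succ) hx y

end LowerCentralSeries

theorem statement2_general (g : Type) [LieRing g] [LieAlgebra ℝ g]
    (J : g →ₗ[ℝ] g) (hJ2 : ∀ v : g, J (J v) = -v)
    (hab : ∀ A B : g, ⁅J A, J B⁆ = ⁅A, B⁆) (m : ℕ) :
    (∀ x ∈ gJ g J m, ∀ y : g, ⁅x, y⁆ ∈ lcs g (m + 1)) ∧
    (∀ x ∈ gJ g J m, J x ∈ gJ g J m) ∧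
    (∀ x ∈ gJ g J m, ∀ y : g, ⁅x, y⁆ ∈ gJ g J m) ∧
    gJ g J (m + 1) ≤ gJ g J m := by
  have lie_mem : ∀ x ∈ gJ g J m, ∀ y : g, ⁅x, y⁆ ∈ lcs g (m + 1) :=
    fun _ => lie_mem_lcs_succ_of_mem_gJ hJ2 hab
  have lcs_succ_le_gJ : lcs g (m + 1) ≤ gJ g J m :=
    (lcs_antitone g m.le_succ).trans le_sup_left
  exact ⟨lie_mem, gJ_mem_invtSubmodule hJ2 m, fun x hx y => lcs_succ_le_gJ (lie_mem x hx y),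
    gJ_antitone J m.le_succ⟩

/-- For an abelian complex structure `J`, the subspace `g_J^m = g^m + J(g^m)`
satisfies `[g_J^m, g] ⊆ g^{m+1}`; in particular each `g_J^m` is a `J`-invariant ideal of `g`,
and the `g_J^m` form a decreasing filtration. -/
theorem statement2 (g : Type) [LieRing g] [LieAlgebra ℝ g] [FiniteDimensional ℝ g]
    (J : g →ₗ[ℝ] g) (hJ2 : ∀ v : g, J (J v) = -v)
    (hab : ∀ A B : g, ⁅J A, J B⁆ = ⁅A, B⁆) (m : ℕ) :
    (∀ x ∈ gJ g J m, ∀ y : g, ⁅x, y⁆ ∈ lcs g (m + 1)) ∧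
    (∀ x ∈ gJ g J m, J x ∈ gJ g J m) ∧
    (∀ x ∈ gJ g J m, ∀ y : g, ⁅x, y⁆ ∈ gJ g J m) ∧
    gJ g J (m + 1) ≤ gJ g J m :=
  statement2_general g J hJ2 hab m
end
end

section
/- Let g be a k-step nilpotent finite-dimensional real Lie algebra (g^k = {0}, g^{k−1} ≠ {0}) with an abelian complex structure J. Then g_J^{k−1} = g^{k−1} + J(g^{k−1}) is contained in the center of g. -/
open scoped TensorProduct

noncomputable section

theorem lie_map_eq_zero_of_surjective {L : Type*} [LieRing L] {J : L → L}
    (hJ : Function.Surjective J) (hab : ∀ A B : L, ⁅J A, J B⁆ = ⁅A, B⁆)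
    {A : L} (hA : ∀ B : L, ⁅A, B⁆ = 0) (B : L) : ⁅J A, B⁆ = 0 := by
  obtain ⟨C, rfl⟩ := hJ B
  rw [hab, hA]

section

variable {g : Type} [LieRing g] [LieAlgebra ℝ g]

theorem map_centerS_le_of_surjective {J : g →ₗ[ℝ] g} (hJ : Function.Surjective J)
    (hab : ∀ A B : g, ⁅J A, J B⁆ = ⁅A, B⁆) : (centerS g).map J ≤ centerS g :=
  Submodule.map_le_iff_le_comap.2 fun _ hA ↦ lie_map_eq_zero_of_surjective hJ hab hA

theorem lcs_succ_eq_bot_iff {m : ℕ} : lcs g (m + 1) = ⊥ ↔ lcs g m ≤ centerS g := by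
  refine Submodule.span_eq_bot.trans ⟨fun h A hA B ↦ h _ ⟨A, hA, B, rfl⟩, ?_⟩
  rintro h _ ⟨A, hA, B, rfl⟩
  exact h hA B

theorem statement3_general {J : g →ₗ[ℝ] g} (hJ : Function.Surjective J)
    (hab : ∀ A B : g, ⁅J A, J B⁆ = ⁅A, B⁆) {m : ℕ} (hm : lcs g (m + 1) = ⊥) :
    gJ g J m ≤ centerS g := by
  have hcenter : lcs g m ≤ centerS g := lcs_succ_eq_bot_iff.1 hm
  exact sup_le hcenter ((Submodule.map_mono hcenter).trans (map_centerS_le_of_surjective hJ hab))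

end

/-- If `g` is `k`-step nilpotent with an abelian complex structure `J`, then
`g_J^{k-1} = g^{k-1} + J(g^{k-1})` is contained in the center of `g`. -/
theorem statement3 (g : Type) [LieRing g] [LieAlgebra ℝ g] [FiniteDimensional ℝ g]
    (J : g →ₗ[ℝ] g) (hJ2 : ∀ v : g, J (J v) = -v)
    (hab : ∀ A B : g, ⁅J A, J B⁆ = ⁅A, B⁆)
    (k : ℕ) (hk : 1 ≤ k) (hstep : lcs g k = ⊥) (hstep' : lcs g (k - 1) ≠ ⊥) :
    ∀ x ∈ gJ g J (k - 1), ∀ B : g, ⁅x, B⁆ = 0 := by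
  obtain ⟨m, rfl⟩ := Nat.exists_eq_add_of_le' hk
  exact statement3_general (fun v ↦ ⟨-J v, by rw [map_neg, hJ2, neg_neg]⟩) hab hstep
end
end

section
/- Let g be a finite-dimensional real Lie algebra with an abelian complex structure J. For all a, b ≥ 0, the complexified Lie bracket satisfies [g_J^{a,(1,0)}, g_J^{b,(0,1)}] ⊆ g_{J,ℂ}^{1+max(a,b)}. In particular (taking b = 0), [g_J^{a,(1,0)}, g^{0,1}] ⊆ g_{J,ℂ}^{a+1}. -/
open scoped TensorProduct

noncomputable section

/-!
Replacing `B` by `J B` in `[JA, JB] = [A, B]` shows that `[JA, B] = -[A, JB]`: inside a bracket, `J`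
can be moved from one entry to the other. Hence `J(g^m)` contributes nothing beyond `g^m` to
brackets, and `[g_J^m, g] ⊆ g^{m+1}`. Antisymmetry of the bracket gives the maximum of the two
indices, and extending scalars gives the claim.
-/

section BaseChange

open Submodule

theorem lie_mem_baseChange {R A L M : Type*} [CommRing R] [CommRing A] [Algebra R A]
    [LieRing L] [LieAlgebra R L] [AddCommGroup M] [Module R M] [LieRingModule L M]
    [LieModule R L M] {p : Submodule R L} {q r : Submodule R M}
    (h : ∀ u ∈ p, ∀ v ∈ q, ⁅u, v⁆ ∈ r) {x : A ⊗[R] L} {y : A ⊗[R] M}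
    (hx : x ∈ p.baseChange A) (hy : y ∈ q.baseChange A) : ⁅x, y⁆ ∈ r.baseChange A := by
  let bracket : A ⊗[R] L →ₗ[A] A ⊗[R] M →ₗ[A] A ⊗[R] M :=
    LieModule.toEnd A (A ⊗[R] L) (A ⊗[R] M)
  suffices map₂ bracket (p.baseChange A) (q.baseChange A) ≤ r.baseChange A from
    this (apply_mem_map₂ bracket hx hy)
  rw [baseChange_eq_span, baseChange_eq_span, map₂_span_span, span_le]
  rintro _ ⟨_, ⟨u, hu, rfl⟩, _, ⟨v, hv, rfl⟩, rfl⟩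
  exact tmul_mem_baseChange_of_mem (1 * 1 : A) (h u hu v hv)

end BaseChange

theorem lie_apply_left_eq_neg_lie_apply {L : Type*} [LieRing L] {J : L → L}
    (hJ2 : ∀ v, J (J v) = -v) (hab : ∀ u v, ⁅J u, J v⁆ = ⁅u, v⁆) (u v : L) :
    ⁅J u, v⁆ = -⁅u, J v⁆ := by
  rw [← hab u (J v), hJ2, lie_neg, neg_neg]

section LowerCentralSeries

variable {g : Type} [LieRing g] [LieAlgebra ℝ g] {J : g →ₗ[ℝ] g} {a b : ℕ} {u v : g}

theorem lie_mem_lcs_succ_s4 (hu : u ∈ lcs g a) (v : g) : ⁅u, v⁆ ∈ lcs g (a + 1) :=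
  Submodule.subset_span ⟨u, hu, v, rfl⟩

theorem cxS_lcs_le_cxS_gJ (m : ℕ) : cxS g (lcs g m) ≤ cxS g (gJ g J m) :=
  Submodule.baseChange_mono ℂ le_sup_left

theorem lie_mem_lcs_succ_of_mem_gJ_s4 (hskew : ∀ A B : g, ⁅J A, B⁆ = -⁅A, J B⁆)
    (hu : u ∈ gJ g J a) (v : g) : ⁅u, v⁆ ∈ lcs g (a + 1) := by
  obtain ⟨p, hp, _, ⟨q, hq, rfl⟩, rfl⟩ := Submodule.mem_sup.1 hu
  rw [add_lie, hskew]
  exact add_mem (lie_mem_lcs_succ_s4 hp v) (neg_mem (lie_mem_lcs_succ_s4 hq (J v)))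

theorem lie_mem_lcs_of_mem_gJ_of_mem_gJ (hskew : ∀ A B : g, ⁅J A, B⁆ = -⁅A, J B⁆)
    (hu : u ∈ gJ g J a) (hv : v ∈ gJ g J b) : ⁅u, v⁆ ∈ lcs g (1 + max a b) := by
  rw [add_comm]
  rcases max_choice a b with hmax | hmax <;> rw [hmax]
  · exact lie_mem_lcs_succ_of_mem_gJ_s4 hskew hu v
  · rw [← lie_skew]
    exact neg_mem (lie_mem_lcs_succ_of_mem_gJ_s4 hskew hv u)

end LowerCentralSeries

theorem statement4_general {g : Type} [LieRing g] [LieAlgebra ℝ g] {J : g →ₗ[ℝ] g}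
    (hskew : ∀ A B : g, ⁅J A, B⁆ = -⁅A, J B⁆) (a b : ℕ) :
    (∀ x ∈ cxS g (gJ g J a), ∀ y ∈ cxS g (gJ g J b), ⁅x, y⁆ ∈ cxS g (lcs g (1 + max a b))) ∧
    (∀ x ∈ cxS g (gJ g J a), ∀ y, ⁅x, y⁆ ∈ cxS g (lcs g (a + 1))) := by
  refine ⟨fun x hx y hy ↦ ?_, fun x hx y ↦ ?_⟩
  · exact lie_mem_baseChange
      (fun u hu v hv ↦ lie_mem_lcs_of_mem_gJ_of_mem_gJ hskew hu hv) hx hy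
  · have hy : y ∈ (⊤ : Submodule ℝ g).baseChange ℂ :=
      Submodule.baseChange_top (R := ℝ) (M := g) ℂ ▸ Submodule.mem_top
    exact lie_mem_baseChange (fun u hu v _ ↦ lie_mem_lcs_succ_of_mem_gJ_s4 hskew hu v) hx hy

/-- For an abelian complex structure,
`[g_J^{a,(1,0)}, g_J^{b,(0,1)}] ⊆ g_{J,ℂ}^{1+max(a,b)}`; in particular (`b = 0`)
`[g_J^{a,(1,0)}, g^{0,1}] ⊆ g_{J,ℂ}^{a+1}`. -/
theorem statement4 (g : Type) [LieRing g] [LieAlgebra ℝ g] [FiniteDimensional ℝ g]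
    (J : g →ₗ[ℝ] g) (hJ2 : ∀ v : g, J (J v) = -v)
    (hab : ∀ A B : g, ⁅J A, J B⁆ = ⁅A, B⁆) (a b : ℕ) :
    (∀ x ∈ gJ10 g J a, ∀ y ∈ gJ01 g J b, ⁅x, y⁆ ∈ cxS g (gJ g J (1 + max a b))) ∧
    (∀ x ∈ gJ10 g J a, ∀ y ∈ eig g J (-Complex.I), ⁅x, y⁆ ∈ cxS g (gJ g J (a + 1))) := by
  have h := statement4_general (lie_apply_left_eq_neg_lie_apply hJ2 hab) a b
  exact ⟨fun x hx y hy ↦ cxS_lcs_le_cxS_gJ _ (h.1 x hx.1 y hy.1),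
    fun x hx y _ ↦ cxS_lcs_le_cxS_gJ _ (h.2 x hx.1 y)⟩
end
end

section
/- Let g = h_{2m+1} ⊕ h_{2n+1} be the direct sum of two Heisenberg algebras, with basis {X_j, Y_j, Z, A_k, B_k, C : 1 ≤ j ≤ m, 1 ≤ k ≤ n} and only non-zero brackets [X_j, Y_j] = Z and [A_k, B_k] = C. Define J by JX_j = Y_j, JA_k = B_k, JZ = C (and JY_j = −X_j, JB_k = −A_k, JC = −Z). Then: (i) J is an abelian complex structure on g; (ii) setting V = (Z − iC)/2, S_j = (X_j − iY_j)/2, T_k = (A_k − iB_k)/2, the non-zero complex structure equations are [S̄_j, S_j] = −(i/2)(V + V̄) and [T̄_k, T_k] = (1/2)(V − V̄); and (iii) with ρ the ℂ-linear functional on g_ℂ with ρ(V) = 1 and ρ = 0 on V̄ and all S_j, S̄_j, T_k, T̄_k, the map t^{1,0} → (t^{0,1})^*, X ↦ (Ȳ ↦ ρ([X, Ȳ])), where t^{1,0} = span_ℂ{S_j, T_k} and t^{0,1} = span_ℂ{S̄_j, T̄_k}, is bijective (dρ is non-degenerate). -/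
/-!
The pairs `(X_j, Y_j)`, `(A_k, B_k)` and `(Z, C)` are alike: each is of the form `(x, J x)`, two
different pairs commute, and so do two first members or two second members. Hence `J² = -1`, and
`⁅J a, J c⁆ = ⁅a, c⁆` has to be checked on these pairs only. In the complexification,
`⁅(x_i - i y_i)/2, (x_j + i y_j)/2⁆` vanishes for `i ≠ j` and is `(i/2) ⁅x_i, y_i⁆` for `i = j`.
So the matrix of the pairing by `ρ` is diagonal, and it is invertible because `V + V̄ = Z` and
`V - V̄ = -i C` give `ρ(Z) = 1` and `ρ(C) = i`.
-/


open scoped TensorProduct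

noncomputable section

/-- `(x - i y)/2` as an element of the complexification `ℂ ⊗[ℝ] h`. -/
def holo (h : Type) [AddCommGroup h] [Module ℝ h] (x y : h) : ℂ ⊗[ℝ] h :=
  ((1 : ℂ)/2) ⊗ₜ[ℝ] x - (Complex.I/2) ⊗ₜ[ℝ] y

/-- `(x + i y)/2` as an element of the complexification `ℂ ⊗[ℝ] h`. -/
def antiholo (h : Type) [AddCommGroup h] [Module ℝ h] (x y : h) : ℂ ⊗[ℝ] h :=
  ((1 : ℂ)/2) ⊗ₜ[ℝ] x + (Complex.I/2) ⊗ₜ[ℝ] y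

/-- The pairing `X ↦ (Y ↦ f ⁅X, Y⁆)` between two subspaces of a complex Lie algebra,
where `f` is a ℂ-linear functional. -/
def bracketPairing (L : Type) [LieRing L] [LieAlgebra ℂ L]
    (f : L →ₗ[ℂ] ℂ) (p q : Submodule ℂ L) : p →ₗ[ℂ] Module.Dual ℂ q where
  toFun X :=
    { toFun := fun Y => f ⁅(X : L), (Y : L)⁆
      map_add' := fun Y₁ Y₂ => by simp [lie_add]
      map_smul' := fun c Y => by simp [lie_smul] }
  map_add' X₁ X₂ := by
    ext Y
    simp [add_lie]
  map_smul' c X := by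
    ext Y
    simp [smul_lie]

section BilinearMap

variable {R V W ι : Type*} [AddCommGroup V] [AddCommGroup W]

theorem injective_domRestrict₁₂_span_of_pairwise_eq_zero [CommRing R] [NoZeroDivisors R]
    [Module R V] [Module R W] (B : V →ₗ[R] W →ₗ[R] R) {s : ι → V} {t : ι → W}
    (hdiag : ∀ i, B (s i) (t i) ≠ 0) (hoff : Pairwise fun i j => B (s i) (t j) = 0) :
    Function.Injective
      (B.domRestrict₁₂ (Submodule.span R (Set.range s)) (Submodule.span R (Set.range t))) := by
  rw [injective_iff_map_eq_zero]
  rintro ⟨x, hx⟩ hBx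
  obtain ⟨c, rfl⟩ := Finsupp.mem_span_range_iff_exists_finsupp.1 hx
  have coord (j : ι) : B (c.sum fun i a => a • s i) (t j) = c j * B (s j) (t j) := by
    rw [map_finsuppSum, LinearMap.finsupp_sum_apply, Finsupp.sum_eq_single j]
    · simp
    · intro i _ hij
      simp [hoff hij]
    · simp
  have hc : c = 0 := by
    ext j
    have hBj : B (c.sum fun i a => a • s i) (t j) = 0 :=
      LinearMap.congr_fun hBx ⟨t j, Submodule.subset_span ⟨j, rfl⟩⟩
    exact (mul_eq_zero.1 ((coord j).symm.trans hBj)).resolve_right (hdiag j)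
  simp [hc]

theorem isPerfPair_domRestrict₁₂_span_of_pairwise_eq_zero [Field R] [Finite ι]
    [Module R V] [Module R W] (B : V →ₗ[R] W →ₗ[R] R) {s : ι → V} {t : ι → W}
    (hdiag : ∀ i, B (s i) (t i) ≠ 0) (hoff : Pairwise fun i j => B (s i) (t j) = 0) :
    (B.domRestrict₁₂ (Submodule.span R (Set.range s))
      (Submodule.span R (Set.range t))).IsPerfPair :=
  have : FiniteDimensional R (Submodule.span R (Set.range s)) :=
    FiniteDimensional.span_of_finite R (Set.finite_range s)
  .of_injective (injective_domRestrict₁₂_span_of_pairwise_eq_zero B hdiag hoff)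
    (injective_domRestrict₁₂_span_of_pairwise_eq_zero B.flip hdiag fun _ _ hij => hoff hij.symm)

end BilinearMap

theorem bijective_bracketPairing_span_of_pairwise_eq_zero {L : Type} {ι : Type*} [LieRing L]
    [LieAlgebra ℂ L] [Finite ι] (f : L →ₗ[ℂ] ℂ) {s t : ι → L}
    (hdiag : ∀ i, f ⁅s i, t i⁆ ≠ 0) (hoff : Pairwise fun i j => f ⁅s i, t j⁆ = 0) :
    Function.Bijective (bracketPairing L f (Submodule.span ℂ (Set.range s))
      (Submodule.span ℂ (Set.range t))) :=
  (isPerfPair_domRestrict₁₂_span_of_pairwise_eq_zero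
    ((LieModule.toEnd ℂ L L : L →ₗ[ℂ] Module.End ℂ L).compr₂ f) hdiag hoff).bijective_left

theorem lie_map_map_of_span_eq_top {R L : Type*} [CommRing R] [LieRing L] [LieAlgebra R L]
    {s : Set L} (hs : Submodule.span R s = ⊤) {J : L →ₗ[R] L}
    (hJ : ∀ x ∈ s, ∀ y ∈ s, ⁅J x, J y⁆ = ⁅x, y⁆) (a c : L) : ⁅J a, J c⁆ = ⁅a, c⁆ := by
  have ha : a ∈ Submodule.span R s := hs ▸ Submodule.mem_top
  have hc : c ∈ Submodule.span R s := hs ▸ Submodule.mem_top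
  induction ha, hc using Submodule.span_induction₂ with
  | mem_mem x y hx hy => exact hJ x hx y hy
  | zero_left | zero_right => simp
  | add_left _ _ _ _ _ _ h₁ h₂ | add_right _ _ _ _ _ _ h₁ h₂ => simp [h₁, h₂]
  | smul_left _ _ _ _ _ h | smul_right _ _ _ _ _ h => simp [h]

/-- Families `P`, `Q` satisfying the Heisenberg relations `⁅P i, Q i⁆ = W i`, all other brackets
between their members being zero. Letting `W` depend on `i` makes a direct sum of Heisenberg
algebras a single such family; a pair of commuting elements is one with `W = 0`. -/
structure IsHeisenbergFamily {L ι : Type*} [LieRing L] (P Q W : ι → L) : Prop where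
  lie_left_left : ∀ i j, ⁅P i, P j⁆ = 0
  lie_right_right : ∀ i j, ⁅Q i, Q j⁆ = 0
  lie_self : ∀ i, ⁅P i, Q i⁆ = W i
  lie_of_ne : ∀ i j, i ≠ j → ⁅P i, Q j⁆ = 0

theorem lie_eq_zero_symm {L : Type*} [LieRing L] {x y : L} (h : ⁅x, y⁆ = 0) : ⁅y, x⁆ = 0 := by
  rw [← lie_skew, h, neg_zero]

namespace IsHeisenbergFamily

variable {L ι κ : Type*} [LieRing L] {P Q W : ι → L} {P' Q' W' : κ → L}

theorem lie_right_left (h : IsHeisenbergFamily P Q W) (i j : ι) : ⁅Q i, P j⁆ = -⁅P i, Q j⁆ := by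
  rw [← lie_skew]
  by_cases hij : i = j
  · rw [hij]
  · rw [h.lie_of_ne i j hij, h.lie_of_ne j i (Ne.symm hij)]

theorem sumElim (h : IsHeisenbergFamily P Q W) (h' : IsHeisenbergFamily P' Q' W')
    (hPP' : ∀ i k, ⁅P i, P' k⁆ = 0) (hPQ' : ∀ i k, ⁅P i, Q' k⁆ = 0)
    (hQP' : ∀ i k, ⁅Q i, P' k⁆ = 0) (hQQ' : ∀ i k, ⁅Q i, Q' k⁆ = 0) :
    IsHeisenbergFamily (Sum.elim P P') (Sum.elim Q Q') (Sum.elim W W') where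
  lie_left_left := by
    rintro (i | i) (j | j)
    exacts [h.lie_left_left i j, hPP' i j, lie_eq_zero_symm (hPP' j i), h'.lie_left_left i j]
  lie_right_right := by
    rintro (i | i) (j | j)
    exacts [h.lie_right_right i j, hQQ' i j, lie_eq_zero_symm (hQQ' j i), h'.lie_right_right i j]
  lie_self := Sum.rec h.lie_self h'.lie_self
  lie_of_ne := by
    rintro (i | i) (j | j) hij
    exacts [h.lie_of_ne i j (ne_of_apply_ne _ hij), hPQ' i j, lie_eq_zero_symm (hQP' j i),
      h'.lie_of_ne i j (ne_of_apply_ne _ hij)]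

theorem sumElim_central (h : IsHeisenbergFamily P Q W) {z c : L} (hzc : ⁅z, c⁆ = 0)
    (hPz : ∀ i, ⁅P i, z⁆ = 0) (hPc : ∀ i, ⁅P i, c⁆ = 0) (hQz : ∀ i, ⁅Q i, z⁆ = 0)
    (hQc : ∀ i, ⁅Q i, c⁆ = 0) :
    IsHeisenbergFamily (Sum.elim P fun _ : Unit => z) (Sum.elim Q fun _ => c) (Sum.elim W 0) :=
  have hpair : IsHeisenbergFamily (fun _ : Unit => z) (fun _ => c) 0 := by
    constructor <;> simp [hzc]
  h.sumElim hpair (fun i _ => hPz i) (fun i _ => hPc i) (fun i _ => hQz i) fun i _ => hQc i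

theorem lie_map_map {R : Type*} [CommRing R] [LieAlgebra R L] (h : IsHeisenbergFamily P Q W)
    (hspan : Submodule.span R (Set.range P ∪ Set.range Q) = ⊤) {J : L →ₗ[R] L}
    (hJP : ∀ i, J (P i) = Q i) (hJQ : ∀ i, J (Q i) = -P i) (a c : L) : ⁅J a, J c⁆ = ⁅a, c⁆ := by
  refine lie_map_map_of_span_eq_top hspan ?_ a c
  rintro _ (⟨i, rfl⟩ | ⟨i, rfl⟩) _ (⟨j, rfl⟩ | ⟨j, rfl⟩)
  · rw [hJP, hJP, h.lie_right_right, h.lie_left_left]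
  · rw [hJP, hJQ, lie_neg, h.lie_right_left, neg_neg]
  · rw [hJP, hJQ, neg_lie, h.lie_right_left]
  · rw [hJQ, hJQ, neg_lie, lie_neg, neg_neg, h.lie_left_left, h.lie_right_right]

end IsHeisenbergFamily

theorem map_map_eq_neg_of_span_eq_top {R M ι : Type*} [Ring R] [AddCommGroup M] [Module R M]
    {P Q : ι → M} (hspan : Submodule.span R (Set.range P ∪ Set.range Q) = ⊤) {J : M →ₗ[R] M}
    (hJP : ∀ i, J (P i) = Q i) (hJQ : ∀ i, J (Q i) = -P i) (v : M) : J (J v) = -v := by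
  have hJJ : J ∘ₗ J = -LinearMap.id := by
    refine LinearMap.ext_on hspan ?_
    rintro _ (⟨i, rfl⟩ | ⟨i, rfl⟩) <;> simp [hJP, hJQ]
  exact LinearMap.congr_fun hJJ v

section Complexification

variable {h : Type} [AddCommGroup h] [Module ℝ h]

theorem one_tmul_eq_holo_add_antiholo (x y : h) :
    (1 : ℂ) ⊗ₜ[ℝ] x = holo h x y + antiholo h x y := by
  rw [holo, antiholo, sub_add_add_cancel, ← TensorProduct.add_tmul, add_halves]

theorem one_tmul_eq_I_smul_holo_sub_antiholo (x y : h) :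
    (1 : ℂ) ⊗ₜ[ℝ] y = Complex.I • (holo h x y - antiholo h x y) := by
  have hsub : holo h x y - antiholo h x y = -((Complex.I / 2 + Complex.I / 2) ⊗ₜ[ℝ] y) := by
    rw [holo, antiholo, TensorProduct.add_tmul]
    abel
  rw [hsub, add_halves, smul_neg, TensorProduct.smul_tmul', smul_eq_mul, Complex.I_mul_I,
    TensorProduct.neg_tmul, neg_neg]

end Complexification

theorem lie_holo_antiholo {g : Type} [LieRing g] [LieAlgebra ℝ g] (x y u v : g) :
    ⁅holo g x y, antiholo g u v⁆ =
      ((1 : ℂ) / 4) ⊗ₜ[ℝ] (⁅x, u⁆ + ⁅y, v⁆) + (Complex.I / 4) ⊗ₜ[ℝ] (⁅x, v⁆ - ⁅y, u⁆) := by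
  have half_half : (1 : ℂ) / 2 * (1 / 2) = 1 / 4 := by norm_num
  have half_I : (1 : ℂ) / 2 * (Complex.I / 2) = Complex.I / 4 := by ring
  have I_half : Complex.I / 2 * ((1 : ℂ) / 2) = Complex.I / 4 := by ring
  have I_I : Complex.I / 2 * (Complex.I / 2) = -(1 / 4) := by
    linear_combination Complex.I_sq / 4
  simp only [holo, antiholo, lie_add, sub_lie, LieAlgebra.ExtendScalars.bracket_tmul, half_half,
    half_I, I_half, I_I, TensorProduct.tmul_add, TensorProduct.tmul_sub, TensorProduct.neg_tmul]
  abel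

namespace IsHeisenbergFamily

variable {g : Type} {ι : Type*} [LieRing g] [LieAlgebra ℝ g] {P Q W : ι → g}

theorem lie_holo_antiholo_eq_smul (h : IsHeisenbergFamily P Q W) (i j : ι) :
    ⁅holo g (P i) (Q i), antiholo g (P j) (Q j)⁆ =
      (Complex.I / 2) • ((1 : ℂ) ⊗ₜ[ℝ] ⁅P i, Q j⁆) := by
  have quarter_add_quarter : Complex.I / 4 + Complex.I / 4 = Complex.I / 2 := by ring
  rw [lie_holo_antiholo, h.lie_left_left, h.lie_right_right, h.lie_right_left, add_zero,
    TensorProduct.tmul_zero, zero_add, sub_neg_eq_add, TensorProduct.tmul_add,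
    ← TensorProduct.add_tmul, quarter_add_quarter, TensorProduct.smul_tmul', smul_eq_mul, mul_one]

theorem lie_antiholo_holo_self (h : IsHeisenbergFamily P Q W) (i : ι) :
    ⁅antiholo g (P i) (Q i), holo g (P i) (Q i)⁆ = (-Complex.I / 2) • ((1 : ℂ) ⊗ₜ[ℝ] W i) := by
  rw [← lie_skew, h.lie_holo_antiholo_eq_smul, h.lie_self, ← neg_smul, neg_div]

theorem lie_antiholo_holo_self_eq_smul_add (h : IsHeisenbergFamily P Q W) (i : ι) (y : g) :
    ⁅antiholo g (P i) (Q i), holo g (P i) (Q i)⁆ =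
      (-Complex.I / 2) • (holo g (W i) y + antiholo g (W i) y) := by
  rw [h.lie_antiholo_holo_self, one_tmul_eq_holo_add_antiholo]

theorem lie_antiholo_holo_self_eq_smul_sub (h : IsHeisenbergFamily P Q W) (i : ι) (x : g) :
    ⁅antiholo g (P i) (Q i), holo g (P i) (Q i)⁆ =
      ((1 : ℂ) / 2) • (holo g x (W i) - antiholo g x (W i)) := by
  have coeff : -Complex.I / 2 * Complex.I = 1 / 2 := by
    linear_combination -Complex.I_sq / 2
  rw [h.lie_antiholo_holo_self, one_tmul_eq_I_smul_holo_sub_antiholo x, smul_smul, coeff]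

theorem bijective_bracketPairing [Finite ι] (h : IsHeisenbergFamily P Q W)
    (f : (ℂ ⊗[ℝ] g) →ₗ[ℂ] ℂ) (hf : ∀ i, f ((1 : ℂ) ⊗ₜ[ℝ] W i) ≠ 0) :
    Function.Bijective (bracketPairing (ℂ ⊗[ℝ] g) f
      (Submodule.span ℂ (Set.range fun i => holo g (P i) (Q i)))
      (Submodule.span ℂ (Set.range fun i => antiholo g (P i) (Q i)))) := by
  refine bijective_bracketPairing_span_of_pairwise_eq_zero f (fun i => ?_) fun i j hij => ?_
  · rw [h.lie_holo_antiholo_eq_smul, h.lie_self, map_smul]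
    exact smul_ne_zero (by simp) (hf i)
  · simp [h.lie_holo_antiholo_eq_smul, h.lie_of_ne i j hij]

end IsHeisenbergFamily

/-- The direct sum `g = h_{2m+1} ⊕ h_{2n+1}` of two Heisenberg algebras with
`JX_j = Y_j`, `JA_k = B_k`, `JZ = C`: (i) `J` is an abelian complex structure; (ii) with
`V = (Z - iC)/2`, `S_j = (X_j - iY_j)/2`, `T_k = (A_k - iB_k)/2`, the non-zero complex
structure equations are `[S̄_j, S_j] = -(i/2)(V + V̄)` and `[T̄_k, T_k] = (1/2)(V - V̄)`;
(iii) with `ρ` dual to `V`, the map `t^{1,0} → (t^{0,1})^*`, `X ↦ (Ȳ ↦ ρ([X, Ȳ]))`,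
is bijective. -/
theorem statement13 (m n : ℕ) (g : Type) [LieRing g] [LieAlgebra ℝ g]
    (X Y : Fin m → g) (A B : Fin n → g) (Z C : g)
    (b : Module.Basis (((Fin m ⊕ Fin m) ⊕ (Fin n ⊕ Fin n)) ⊕ Fin 2) ℝ g)
    (hbX : ∀ j, b (Sum.inl (Sum.inl (Sum.inl j))) = X j)
    (hbY : ∀ j, b (Sum.inl (Sum.inl (Sum.inr j))) = Y j)
    (hbA : ∀ k, b (Sum.inl (Sum.inr (Sum.inl k))) = A k)
    (hbB : ∀ k, b (Sum.inl (Sum.inr (Sum.inr k))) = B k)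
    (hbZ : b (Sum.inr 0) = Z) (hbC : b (Sum.inr 1) = C)
    (hXY : ∀ j, ⁅X j, Y j⁆ = Z)
    (hXYne : ∀ j k, j ≠ k → ⁅X j, Y k⁆ = 0)
    (hXX : ∀ j k, ⁅X j, X k⁆ = 0) (hYY : ∀ j k, ⁅Y j, Y k⁆ = 0)
    (hAB : ∀ k, ⁅A k, B k⁆ = C)
    (hABne : ∀ k l, k ≠ l → ⁅A k, B l⁆ = 0)
    (hAA : ∀ k l, ⁅A k, A l⁆ = 0) (hBB : ∀ k l, ⁅B k, B l⁆ = 0)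
    (hXA : ∀ j k, ⁅X j, A k⁆ = 0) (hXB : ∀ j k, ⁅X j, B k⁆ = 0)
    (hYA : ∀ j k, ⁅Y j, A k⁆ = 0) (hYB : ∀ j k, ⁅Y j, B k⁆ = 0)
    (hXZ : ∀ j, ⁅X j, Z⁆ = 0) (hXC : ∀ j, ⁅X j, C⁆ = 0)
    (hYZ : ∀ j, ⁅Y j, Z⁆ = 0) (hYC : ∀ j, ⁅Y j, C⁆ = 0)
    (hAZ : ∀ k, ⁅A k, Z⁆ = 0) (hAC : ∀ k, ⁅A k, C⁆ = 0)
    (hBZ : ∀ k, ⁅B k, Z⁆ = 0) (hBC : ∀ k, ⁅B k, C⁆ = 0)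
    (hZC : ⁅Z, C⁆ = 0)
    (J : g →ₗ[ℝ] g)
    (hJX : ∀ j, J (X j) = Y j) (hJY : ∀ j, J (Y j) = -X j)
    (hJA : ∀ k, J (A k) = B k) (hJB : ∀ k, J (B k) = -A k)
    (hJZ : J Z = C) (hJC : J C = -Z)
    (ρ : (ℂ ⊗[ℝ] g) →ₗ[ℂ] ℂ)
    (hρV : ρ (holo g Z C) = 1) (hρVb : ρ (antiholo g Z C) = 0)
    (hρS : ∀ j, ρ (holo g (X j) (Y j)) = 0)
    (hρSb : ∀ j, ρ (antiholo g (X j) (Y j)) = 0)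
    (hρT : ∀ k, ρ (holo g (A k) (B k)) = 0)
    (hρTb : ∀ k, ρ (antiholo g (A k) (B k)) = 0) :
    ((∀ v : g, J (J v) = -v) ∧ (∀ a c : g, ⁅J a, J c⁆ = ⁅a, c⁆)) ∧
    ((∀ j, ⁅antiholo g (X j) (Y j), holo g (X j) (Y j)⁆
        = (-(Complex.I)/2) • (holo g Z C + antiholo g Z C)) ∧
     (∀ k, ⁅antiholo g (A k) (B k), holo g (A k) (B k)⁆
        = ((1 : ℂ)/2) • (holo g Z C - antiholo g Z C))) ∧
    Function.Bijective (bracketPairing (ℂ ⊗[ℝ] g) ρ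
      (Submodule.span ℂ
        ((Set.range fun j => holo g (X j) (Y j)) ∪ (Set.range fun k => holo g (A k) (B k))))
      (Submodule.span ℂ
        ((Set.range fun j => antiholo g (X j) (Y j)) ∪
          (Set.range fun k => antiholo g (A k) (B k))))) := by
  have hS : IsHeisenbergFamily X Y fun _ => Z := ⟨hXX, hYY, hXY, hXYne⟩
  have hT : IsHeisenbergFamily A B fun _ => C := ⟨hAA, hBB, hAB, hABne⟩
  have hST := hS.sumElim hT hXA hXB hYA hYB
  let P : (Fin m ⊕ Fin n) ⊕ Unit → g := Sum.elim (Sum.elim X A) fun _ => Z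
  let Q : (Fin m ⊕ Fin n) ⊕ Unit → g := Sum.elim (Sum.elim Y B) fun _ => C
  have hPQ : IsHeisenbergFamily P Q _ :=
    hST.sumElim_central hZC (Sum.forall.2 ⟨hXZ, hAZ⟩) (Sum.forall.2 ⟨hXC, hAC⟩)
      (Sum.forall.2 ⟨hYZ, hBZ⟩) (Sum.forall.2 ⟨hYC, hBC⟩)
  have hspan : Submodule.span ℝ (Set.range P ∪ Set.range Q) = ⊤ := by
    refine eq_top_mono (Submodule.span_mono (Set.range_subset_iff.2 ?_)) b.span_eq
    simp [P, Q, Sum.forall, Fin.forall_fin_two, hbX, hbY, hbA, hbB, hbZ, hbC]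
  have hJP : ∀ i, J (P i) = Q i := Sum.forall.2 ⟨Sum.forall.2 ⟨hJX, hJA⟩, fun _ => hJZ⟩
  have hJQ : ∀ i, J (Q i) = -P i := Sum.forall.2 ⟨Sum.forall.2 ⟨hJY, hJB⟩, fun _ => hJC⟩
  have hρ : ∀ i, ρ ((1 : ℂ) ⊗ₜ[ℝ] Sum.elim (fun _ : Fin m => Z) (fun _ : Fin n => C) i) ≠ 0 :=
    Sum.forall.2 ⟨fun _ => by simp [one_tmul_eq_holo_add_antiholo Z C, hρV, hρVb],
      fun _ => by simp [one_tmul_eq_I_smul_holo_sub_antiholo Z C, hρV, hρVb]⟩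
  have hbij := hST.bijective_bracketPairing ρ hρ
  rw [Sum.range_eq, Sum.range_eq] at hbij
  exact ⟨⟨map_map_eq_neg_of_span_eq_top hspan hJP hJQ, hPQ.lie_map_map hspan hJP hJQ⟩,
    ⟨fun j => hS.lie_antiholo_holo_self_eq_smul_add j C,
      fun k => hT.lie_antiholo_holo_self_eq_smul_sub k Z⟩, hbij⟩
end
end

section
/- Let W_{4n+6} be the real Lie algebra with basis {X_{4k+1}, X_{4k+2}, X_{4k+3}, X_{4k+4}, Z_1, Z_2 : 0 ≤ k ≤ n} and only non-zero brackets [X_{4k+1}, X_{4k+3}] = −(1/2)Z_1, [X_{4k+1}, X_{4k+4}] = −(1/2)Z_2, [X_{4k+2}, X_{4k+3}] = −(1/2)Z_2, [X_{4k+2}, X_{4k+4}] = (1/2)Z_1, with abelian complex structure J given by JX_{4k+1} = X_{4k+2}, JX_{4k+3} = −X_{4k+4}, JZ_1 = −Z_2, and set V = (Z_1 + iZ_2)/2, T_{2k+1} = (X_{4k+1} − iX_{4k+2})/2, T_{2k+2} = (X_{4k+3} + iX_{4k+4})/2. Then the space {X ∈ g^{1,0} : π^{1,0}([X, Ȳ])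 = 0 for all Ȳ ∈ g^{0,1}} equals span_ℂ{V, T_1, T_3, …, T_{2n+1}} and has dimension n + 2. (This space is the invariant cohomology H^0(g^{1,0}) of holomorphic vector fields; together with dim H^1(g^{0,0}) = dim (g^{0,1})^* = 2n + 3, it gives dim H^1_Λ = 3n + 5 for Λ = V ∧ T with T in span_ℂ{T_2, T_4, …, T_{2n+2}}.) -/
open scoped TensorProduct

noncomputable section

/-- The space `{X ∈ g^{1,0} : π^{1,0}([X, Ȳ]) = 0 for all Ȳ ∈ g^{0,1}}`, i.e. the kernel of
the Cauchy–Riemann operator on invariant `(1,0)`-vector fields (invariant holomorphic vector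
fields); `π^{1,0} w = 0` is expressed as `w ∈ g^{0,1}`. -/
def holKer (g : Type) [LieRing g] [LieAlgebra ℝ g] (J : g →ₗ[ℝ] g) :
    Submodule ℂ (ℂ ⊗[ℝ] g) where
  carrier := {x | x ∈ eig g J Complex.I ∧
    ∀ Y ∈ eig g J (-Complex.I), ⁅x, Y⁆ ∈ eig g J (-Complex.I)}
  add_mem' := by
    rintro a c ⟨ha1, ha2⟩ ⟨hc1, hc2⟩
    exact ⟨add_mem ha1 hc1, fun Y hY => by
      rw [add_lie]; exact add_mem (ha2 Y hY) (hc2 Y hY)⟩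
  zero_mem' := ⟨zero_mem _, fun Y hY => by rw [zero_lie]; exact zero_mem _⟩
  smul_mem' := by
    rintro c a ⟨h1, h2⟩
    exact ⟨Submodule.smul_mem _ _ h1, fun Y hY => by
      rw [smul_lie]; exact Submodule.smul_mem _ _ (h2 Y hY)⟩

/-!
A `(1,0)`-vector is `(u - iJu)/2` for a unique `u ∈ g`. When `J` is abelian, the bracket of
`(u - iJu)/2` with `(v + iJv)/2` is `([u, v] + i[u, Jv])/2`, which is of type `(0,1)` exactly when
`[u, Jv] = J[u, v]`. Invariant holomorphic vector fields are therefore the vectors `u` whose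
adjoint action commutes with `J`. In `W_{4n+6}` the vectors `X_{4k+1}`, `X_{4k+2}`, `Z_1`, `Z_2`
have this property, whereas `ad X_{4k+3}` and `ad X_{4k+4}` anticommute with `J`; testing on
`X_{4k+1}` shows that no combination involving the latter two commutes with `J`.
-/

section Complexification

variable {h : Type} [AddCommGroup h] [Module ℝ h]

theorem antiholo_eq_holo_neg (x y : h) : antiholo h x y = holo h x (-y) := by
  rw [antiholo, holo, TensorProduct.tmul_neg, sub_neg_eq_add]

theorem holo_add (x y x' y' : h) : holo h (x + x') (y + y') = holo h x y + holo h x' y' := by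
  simp only [holo, TensorProduct.tmul_add]
  abel

theorem real_smul_holo (r : ℝ) (x y : h) : r • holo h x y = holo h (r • x) (r • y) := by
  simp only [holo, smul_sub, TensorProduct.tmul_smul]

theorem I_smul_holo (x y : h) : Complex.I • holo h x y = holo h y (-x) := by
  have I_mul_I_div_two : Complex.I * (Complex.I / 2) = -(1 / 2) := by
    rw [← mul_div_assoc, Complex.I_mul_I, neg_div]
  simp only [holo, smul_sub, TensorProduct.smul_tmul', smul_eq_mul, I_mul_I_div_two,
    mul_one_div, TensorProduct.neg_tmul, TensorProduct.tmul_neg]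
  abel

theorem smul_holo (c : ℂ) (x y : h) :
    c • holo h x y = holo h (c.re • x + c.im • y) (c.re • y - c.im • x) := by
  calc c • holo h x y = c.re • holo h x y + c.im • Complex.I • holo h x y := by
        conv_lhs => rw [← Complex.re_add_im c, add_smul, mul_smul]
        simp only [← Complex.coe_algebraMap, algebraMap_smul]
    _ = holo h (c.re • x + c.im • y) (c.re • y - c.im • x) := by
        rw [I_smul_holo, real_smul_holo, real_smul_holo, ← holo_add, smul_neg, sub_eq_add_neg]

theorem exists_holo_eq (z : ℂ ⊗[ℝ] h) : ∃ x y, holo h x y = z := by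
  induction z with
  | zero => exact ⟨0, 0, by simp only [holo, TensorProduct.tmul_zero, sub_zero]⟩
  | tmul c x =>
    refine ⟨(2 * c.re) • x, -(2 * c.im) • x, ?_⟩
    simp only [holo, ← TensorProduct.smul_tmul, ← TensorProduct.sub_tmul]
    congr 1
    simp only [Complex.real_smul]
    push_cast
    linear_combination Complex.re_add_im c
  | add z w hz hw =>
    obtain ⟨x, y, rfl⟩ := hz
    obtain ⟨x', y', rfl⟩ := hw
    exact ⟨x + x', y + y', holo_add x y x' y'⟩

theorem holo_inj {x y x' y' : h} : holo h x y = holo h x' y' ↔ x = x' ∧ y = y' := by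
  refine ⟨fun heq => ⟨?_, ?_⟩, fun ⟨hx, hy⟩ => by rw [hx, hy]⟩
  · have real_part : ∀ u v : h,
        TensorProduct.lid ℝ h (Complex.reLm.rTensor h (holo h u v)) = (1 / 2 : ℝ) • u := by
      simp [holo]
    have half_eq := real_part x y
    rw [heq, real_part] at half_eq
    exact (smul_right_injective h (by norm_num : (1 / 2 : ℝ) ≠ 0) half_eq).symm
  · have imaginary_part : ∀ u v : h,
        TensorProduct.lid ℝ h (Complex.imLm.rTensor h (holo h u v)) = -((1 / 2 : ℝ) • v) := by
      simp [holo]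
    have half_eq := imaginary_part x y
    rw [heq, imaginary_part] at half_eq
    exact (smul_right_injective h (by norm_num : (1 / 2 : ℝ) ≠ 0) (neg_injective half_eq)).symm

theorem baseChange_holo (J : h →ₗ[ℝ] h) (x y : h) :
    J.baseChange ℂ (holo h x y) = holo h (J x) (J y) := by
  simp only [holo, map_sub, LinearMap.baseChange_tmul]

/-- The map `u ↦ (u - iJu)/2` from `h` to its complexification, which is the `(1,0)`-part of `u`
when `J ∘ J = -1`. -/
def holoPart (J : h →ₗ[ℝ] h) : h →ₗ[ℝ] ℂ ⊗[ℝ] h where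
  toFun u := holo h u (J u)
  map_add' u v := by rw [map_add, holo_add]
  map_smul' r u := by rw [map_smul, real_smul_holo, RingHom.id_apply]

theorem holoPart_apply (J : h →ₗ[ℝ] h) (u : h) : holoPart J u = holo h u (J u) := rfl

theorem holoPart_injective (J : h →ₗ[ℝ] h) : Function.Injective (holoPart J) :=
  fun _ _ heq => (holo_inj.1 heq).1

theorem smul_holoPart {J : h →ₗ[ℝ] h} (hJ : ∀ u, J (J u) = -u) (c : ℂ) (u : h) :
    c • holoPart J u = holoPart J (c.re • u + c.im • J u) := by
  rw [holoPart_apply, holoPart_apply, smul_holo, map_add, map_smul, map_smul, hJ, smul_neg,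
    sub_eq_add_neg]

variable {ι : Type*}

theorem holoPart_mem_span_of_mem_span {J : h →ₗ[ℝ] h} (hJ : ∀ u, J (J u) = -u) {w : ι → h} {u : h}
    (hu : u ∈ Submodule.span ℝ (Set.range (Sum.elim w (J ∘ w)))) :
    holoPart J u ∈ Submodule.span ℂ (Set.range (holoPart J ∘ w)) := by
  suffices Submodule.span ℝ (Set.range (Sum.elim w (J ∘ w))) ≤
      ((Submodule.span ℂ (Set.range (holoPart J ∘ w))).restrictScalars ℝ).comap (holoPart J) from
    this hu
  have holoPart_mem (i : ι) : holoPart J (w i) ∈ Submodule.span ℂ (Set.range (holoPart J ∘ w)) :=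
    Submodule.subset_span ⟨i, rfl⟩
  rw [Submodule.span_le]
  rintro _ ⟨i | i, rfl⟩
  · exact holoPart_mem i
  · have I_smul_eq : Complex.I • holoPart J (w i) = holoPart J (J (w i)) := by
      rw [smul_holoPart hJ, Complex.I_re, Complex.I_im, zero_smul, one_smul, zero_add]
    change holoPart J (J (w i)) ∈ Submodule.span ℂ (Set.range (holoPart J ∘ w))
    exact I_smul_eq ▸ Submodule.smul_mem _ Complex.I (holoPart_mem i)

theorem linearIndependent_holoPart_comp {J : h →ₗ[ℝ] h} (hJ : ∀ u, J (J u) = -u) {w : ι → h}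
    (hw : LinearIndependent ℝ (Sum.elim w (J ∘ w))) :
    LinearIndependent ℂ (holoPart J ∘ w) := by
  rw [linearIndependent_iff'] at hw ⊢
  intro s c hc i hi
  have real_relation : ∑ j ∈ s, ((c j).re • w j + (c j).im • J (w j)) = 0 := by
    apply holoPart_injective J
    rw [map_sum, map_zero, ← hc]
    exact Finset.sum_congr rfl fun j _ => (smul_holoPart hJ (c j) (w j)).symm
  have coeff_eq_zero := hw (s.disjSum s) (Sum.elim (fun j => (c j).re) (fun j => (c j).im)) (by
    rw [Finset.sum_disjSum, ← real_relation, Finset.sum_add_distrib]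
    rfl)
  exact Complex.ext (coeff_eq_zero (.inl i) (Finset.inl_mem_disjSum.2 hi))
    (coeff_eq_zero (.inr i) (Finset.inr_mem_disjSum.2 hi))

end Complexification

section AbelianComplexStructure

variable {g : Type*} [LieRing g] [LieAlgebra ℝ g] {J : g →ₗ[ℝ] g}

/-- `J` is an abelian complex structure on the real Lie algebra `g`. -/
structure IsAbelianComplexStructure (J : g →ₗ[ℝ] g) : Prop where
  apply_apply (u : g) : J (J u) = -u
  lie_apply_apply (u v : g) : ⁅J u, J v⁆ = ⁅u, v⁆

theorem IsAbelianComplexStructure.lie_apply (hJ : IsAbelianComplexStructure J) (u v : g) :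
    ⁅J u, v⁆ = -⁅u, J v⁆ := by
  rw [← hJ.lie_apply_apply u (J v), hJ.apply_apply, lie_neg, neg_neg]

/-- The subspace of those `u` whose adjoint action commutes with `J`. -/
def adCommutant (J : g →ₗ[ℝ] g) : Submodule ℝ g where
  carrier := {u | ∀ v, ⁅u, J v⁆ = J ⁅u, v⁆}
  add_mem' hu hu' v := by rw [add_lie, add_lie, hu v, hu' v, map_add]
  zero_mem' v := by rw [zero_lie, zero_lie, map_zero]
  smul_mem' r u hu v := by rw [smul_lie, smul_lie, hu v, map_smul]

end AbelianComplexStructure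

section HolomorphicVectorFields

variable {g : Type} [LieRing g] [LieAlgebra ℝ g] {J : g →ₗ[ℝ] g}

theorem lie_holo_holo (x y x' y' : g) :
    ⁅holo g x y, holo g x' y'⁆ =
      (1 / 2 : ℂ) • holo g (⁅x, x'⁆ - ⁅y, y'⁆) (⁅x, y'⁆ + ⁅y, x'⁆) := by
  have I_div_two_sq : Complex.I / 2 * (Complex.I / 2) = -(1 / 2 * (1 / 2)) := by
    linear_combination Complex.I_mul_I / 4
  simp only [holo, sub_lie, lie_sub, LieAlgebra.ExtendScalars.bracket_tmul, smul_sub, smul_add,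
    TensorProduct.smul_tmul', smul_eq_mul, TensorProduct.tmul_add, TensorProduct.tmul_sub,
    I_div_two_sq, TensorProduct.neg_tmul, mul_comm (Complex.I / 2)]
  abel

theorem holo_mem_eig_I_iff (hJ : ∀ u, J (J u) = -u) (x y : g) :
    holo g x y ∈ eig g J Complex.I ↔ y = J x := by
  change J.baseChange ℂ (holo g x y) = Complex.I • holo g x y ↔ y = J x
  rw [baseChange_holo, I_smul_holo, holo_inj]
  exact ⟨fun hxy => hxy.1.symm, fun hy => ⟨hy.symm, by rw [hy, hJ]⟩⟩

theorem holo_mem_eig_neg_I_iff (hJ : ∀ u, J (J u) = -u) (x y : g) :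
    holo g x y ∈ eig g J (-Complex.I) ↔ y = -J x := by
  change J.baseChange ℂ (holo g x y) = -Complex.I • holo g x y ↔ y = -J x
  rw [baseChange_holo, neg_smul, ← smul_neg, ← neg_one_smul ℝ, real_smul_holo, neg_one_smul,
    neg_one_smul, I_smul_holo, neg_neg, holo_inj]
  exact ⟨fun hxy => by rw [hxy.1, neg_neg],
    fun hy => ⟨by rw [hy, neg_neg], by rw [hy, map_neg, hJ, neg_neg]⟩⟩

theorem holo_mem_holKer_iff (hJ : IsAbelianComplexStructure J) (x y : g) :
    holo g x y ∈ holKer g J ↔ y = J x ∧ x ∈ adCommutant J := by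
  have lie_mem_iff (v : g) :
      ⁅holo g x (J x), holo g v (-J v)⁆ ∈ eig g J (-Complex.I) ↔ ⁅x, J v⁆ = J ⁅x, v⁆ := by
    have lie_eq : ⁅holo g x (J x), holo g v (-J v)⁆ = holo g ⁅x, v⁆ (-⁅x, J v⁆) := by
      rw [lie_holo_holo, lie_neg, lie_neg, sub_neg_eq_add, hJ.lie_apply_apply, hJ.lie_apply,
        ← two_smul ℝ ⁅x, v⁆, ← two_smul ℝ (-⁅x, J v⁆), ← real_smul_holo,
        ← algebraMap_smul ℂ (2 : ℝ), smul_smul]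
      norm_num
    rw [lie_eq, holo_mem_eig_neg_I_iff hJ.apply_apply, neg_inj]
  change (holo g x y ∈ eig g J Complex.I ∧
    ∀ Y ∈ eig g J (-Complex.I), ⁅holo g x y, Y⁆ ∈ eig g J (-Complex.I)) ↔ _
  rw [holo_mem_eig_I_iff hJ.apply_apply]
  refine and_congr_right ?_
  rintro rfl
  refine ⟨fun lie_mem v => (lie_mem_iff v).1 (lie_mem _ ?_), fun hx Y hY => ?_⟩
  · rw [holo_mem_eig_neg_I_iff hJ.apply_apply]
  · obtain ⟨v, v', rfl⟩ := exists_holo_eq Y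
    obtain rfl := (holo_mem_eig_neg_I_iff hJ.apply_apply v v').1 hY
    exact (lie_mem_iff v).2 (hx v)

theorem holoPart_mem_holKer_iff (hJ : IsAbelianComplexStructure J) (u : g) :
    holoPart J u ∈ holKer g J ↔ u ∈ adCommutant J := by
  rw [holoPart_apply, holo_mem_holKer_iff hJ, and_iff_right rfl]

variable {ι : Type*} {w : ι → g}

theorem holKer_eq_span_holoPart (hJ : IsAbelianComplexStructure J)
    (hw : ∀ i, w i ∈ adCommutant J)
    (hspan : adCommutant J ≤ Submodule.span ℝ (Set.range (Sum.elim w (J ∘ w)))) :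
    holKer g J = Submodule.span ℂ (Set.range (holoPart J ∘ w)) := by
  apply le_antisymm
  · intro z hz
    obtain ⟨u, v, rfl⟩ := exists_holo_eq z
    obtain ⟨rfl, hu⟩ := (holo_mem_holKer_iff hJ u v).1 hz
    exact holoPart_mem_span_of_mem_span hJ.apply_apply (hspan hu)
  · rw [Submodule.span_le]
    rintro _ ⟨i, rfl⟩
    exact (holoPart_mem_holKer_iff hJ (w i)).2 (hw i)

end HolomorphicVectorFields

section WAlgebra

/-- The basis `b` of the real Lie algebra `g`, with its endomorphism `J`, is the standard basis of
`W_{4n+6}` with its complex structure, where `X_{4k+i+1}` is `b (.inl (k, i))`, `Z_1` and `Z_2` are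
`b (.inr 0)` and `b (.inr 1)`, and `k` ranges over an arbitrary index type `ι` in place of
`{0, …, n}`. -/
structure IsWBasis {ι g : Type*} [LieRing g] [LieAlgebra ℝ g]
    (b : Module.Basis ((ι × Fin 4) ⊕ Fin 2) ℝ g) (J : g →ₗ[ℝ] g) : Prop where
  lie_zero_two (k : ι) : ⁅b (.inl (k, 0)), b (.inl (k, 2))⁆ = -(1 / 2 : ℝ) • b (.inr 0)
  lie_zero_three (k : ι) : ⁅b (.inl (k, 0)), b (.inl (k, 3))⁆ = -(1 / 2 : ℝ) • b (.inr 1)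
  lie_one_two (k : ι) : ⁅b (.inl (k, 1)), b (.inl (k, 2))⁆ = -(1 / 2 : ℝ) • b (.inr 1)
  lie_one_three (k : ι) : ⁅b (.inl (k, 1)), b (.inl (k, 3))⁆ = (1 / 2 : ℝ) • b (.inr 0)
  lie_zero_one (k : ι) : ⁅b (.inl (k, 0)), b (.inl (k, 1))⁆ = 0
  lie_two_three (k : ι) : ⁅b (.inl (k, 2)), b (.inl (k, 3))⁆ = 0
  lie_of_ne (k l : ι) (hkl : k ≠ l) (i j : Fin 4) : ⁅b (.inl (k, i)), b (.inl (l, j))⁆ = 0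
  lie_inl_inr_zero (k : ι) (i : Fin 4) : ⁅b (.inl (k, i)), b (.inr 0)⁆ = 0
  lie_inl_inr_one (k : ι) (i : Fin 4) : ⁅b (.inl (k, i)), b (.inr 1)⁆ = 0
  lie_inr_inr : ⁅b (.inr 0), b (.inr 1)⁆ = 0
  apply_zero (k : ι) : J (b (.inl (k, 0))) = b (.inl (k, 1))
  apply_one (k : ι) : J (b (.inl (k, 1))) = -b (.inl (k, 0))
  apply_two (k : ι) : J (b (.inl (k, 2))) = -b (.inl (k, 3))
  apply_three (k : ι) : J (b (.inl (k, 3))) = b (.inl (k, 2))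
  apply_inr_zero : J (b (.inr 0)) = -b (.inr 1)
  apply_inr_one : J (b (.inr 1)) = b (.inr 0)

/-- The vectors `Z_1` (at `none`) and `X_{4k+1}` (at `some k`), whose images under `holoPart J`
are `V` and `T_{2k+1}`. -/
def holoGenerator {ι g : Type*} [AddCommGroup g] [Module ℝ g]
    (b : Module.Basis ((ι × Fin 4) ⊕ Fin 2) ℝ g) : Option ι → g
  | none => b (.inr 0)
  | some k => b (.inl (k, 0))

namespace IsWBasis

variable {ι g : Type*} [LieRing g] [LieAlgebra ℝ g]
  {b : Module.Basis ((ι × Fin 4) ⊕ Fin 2) ℝ g} {J : g →ₗ[ℝ] g}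

theorem apply_apply (h : IsWBasis b J) (u : g) : J (J u) = -u := by
  suffices J ∘ₗ J = -LinearMap.id from LinearMap.congr_fun this u
  refine b.ext ?_
  rintro (⟨k, i⟩ | i) <;> fin_cases i <;>
    simp [h.apply_zero, h.apply_one, h.apply_two, h.apply_three, h.apply_inr_zero,
      h.apply_inr_one]

theorem lie_inr (h : IsWBasis b J) (u : g) (i : Fin 2) : ⁅u, b (.inr i)⁆ = 0 := by
  have basis_lie_inr (p) : ⁅b p, b (.inr i)⁆ = 0 := by
    have lie_inr_one_zero : ⁅b (.inr 1), b (.inr 0)⁆ = 0 := by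
      rw [← lie_skew, h.lie_inr_inr, neg_zero]
    rcases p with ⟨k, j⟩ | j
    · fin_cases i
      · exact h.lie_inl_inr_zero k j
      · exact h.lie_inl_inr_one k j
    · fin_cases i <;> fin_cases j <;> simp [h.lie_inr_inr, lie_inr_one_zero]
  have ad_eq_zero : (LieAlgebra.ad ℝ g (b (.inr i)) : g →ₗ[ℝ] g) = 0 := b.ext fun p => by
    rw [LieAlgebra.ad_apply, ← lie_skew, basis_lie_inr, neg_zero, LinearMap.zero_apply]
  rw [← lie_skew, ← LieAlgebra.ad_apply ℝ, ad_eq_zero, LinearMap.zero_apply, neg_zero]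

theorem lie_apply_inr (h : IsWBasis b J) (u : g) (i : Fin 2) : ⁅u, J (b (.inr i))⁆ = 0 := by
  fin_cases i
  · simp [h.apply_inr_zero, h.lie_inr]
  · simp [h.apply_inr_one, h.lie_inr]

theorem lie_apply_apply_inl (h : IsWBasis b J) (k l : ι) (i j : Fin 4) :
    ⁅J (b (.inl (k, i))), J (b (.inl (l, j)))⁆ = ⁅b (.inl (k, i)), b (.inl (l, j))⁆ := by
  by_cases hkl : k = l
  · subst hkl
    have skew (i j : Fin 4) := (lie_skew (b (.inl (k, i))) (b (.inl (k, j)))).symm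
    fin_cases i <;> fin_cases j <;>
      simp [h.apply_zero, h.apply_one, h.apply_two, h.apply_three, h.lie_zero_one, h.lie_zero_two,
        h.lie_zero_three, h.lie_one_two, h.lie_one_three, h.lie_two_three, skew 1 0, skew 2 0,
        skew 3 0, skew 2 1, skew 3 1, skew 3 2]
  · fin_cases i <;> fin_cases j <;>
      simp [h.apply_zero, h.apply_one, h.apply_two, h.apply_three, h.lie_of_ne k l hkl]

theorem isAbelianComplexStructure (h : IsWBasis b J) : IsAbelianComplexStructure J where
  apply_apply := h.apply_apply
  lie_apply_apply u v := by
    let bracket : g →ₗ[ℝ] g →ₗ[ℝ] g := (LieAlgebra.ad ℝ g : g →ₗ[ℝ] Module.End ℝ g)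
    suffices bracket.compl₁₂ J J = bracket from LinearMap.congr_fun₂ this u v
    refine LinearMap.ext_basis b b fun p q => ?_
    change ⁅J (b p), J (b q)⁆ = ⁅b p, b q⁆
    rcases p with ⟨k, i⟩ | i
    · rcases q with ⟨l, j⟩ | j
      · exact h.lie_apply_apply_inl k l i j
      · rw [h.lie_apply_inr, h.lie_inr]
    · rw [← lie_skew, h.lie_apply_inr, ← lie_skew, h.lie_inr]

theorem lie_one_zero (h : IsWBasis b J) (k : ι) : ⁅b (.inl (k, 1)), b (.inl (k, 0))⁆ = 0 := by
  rw [← lie_skew, h.lie_zero_one, neg_zero]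

theorem apply_lie_inl_zero (h : IsWBasis b J) (k : ι) (u : g) :
    J ⁅b (.inl (k, 0)), u⁆ = -⁅b (.inl (k, 1)), u⁆ := by
  suffices J ∘ₗ (LieAlgebra.ad ℝ g (b (.inl (k, 0))) : g →ₗ[ℝ] g) =
      -(LieAlgebra.ad ℝ g (b (.inl (k, 1))) : g →ₗ[ℝ] g) from LinearMap.congr_fun this u
  refine b.ext ?_
  rintro (⟨l, i⟩ | i)
  · by_cases hkl : k = l
    · subst hkl
      fin_cases i <;>
        simp [h.lie_zero_one, h.lie_one_zero, h.lie_zero_two, h.lie_zero_three, h.lie_one_two,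
          h.lie_one_three, h.apply_inr_zero, h.apply_inr_one]
    · simp [h.lie_of_ne k l hkl]
  · simp [h.lie_inr]

theorem lie_inl_one (h : IsWBasis b J) (k : ι) (u : g) :
    ⁅b (.inl (k, 1)), u⁆ = (1 / 2 : ℝ) • (b.repr u (.inl (k, 3)) • b (.inr 0) -
      b.repr u (.inl (k, 2)) • b (.inr 1)) := by
  classical
  suffices (LieAlgebra.ad ℝ g (b (.inl (k, 1))) : g →ₗ[ℝ] g) =
      (1 / 2 : ℝ) • ((b.coord (.inl (k, 3))).smulRight (b (.inr 0)) -
        (b.coord (.inl (k, 2))).smulRight (b (.inr 1))) from LinearMap.congr_fun this u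
  refine b.ext ?_
  rintro (⟨l, i⟩ | i)
  · by_cases hkl : k = l
    · subst hkl
      fin_cases i <;> simp [h.lie_one_zero, h.lie_one_two, h.lie_one_three]
    · simp [h.lie_of_ne k l hkl, Ne.symm hkl]
  · simp [h.lie_inr]

theorem repr_eq_zero_of_mem_adCommutant (h : IsWBasis b J) {u : g} (hu : u ∈ adCommutant J)
    (k : ι) : b.repr u (.inl (k, 2)) = 0 ∧ b.repr u (.inl (k, 3)) = 0 := by
  have lie_eq_neg : ⁅b (.inl (k, 1)), u⁆ = -⁅b (.inl (k, 1)), u⁆ := by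
    calc ⁅b (.inl (k, 1)), u⁆ = -⁅u, J (b (.inl (k, 0)))⁆ := by rw [h.apply_zero, lie_skew]
      _ = J ⁅b (.inl (k, 0)), u⁆ := by rw [hu, ← map_neg, lie_skew]
      _ = -⁅b (.inl (k, 1)), u⁆ := h.apply_lie_inl_zero k u
  have : IsAddTorsionFree g := .of_isTorsionFree ℝ g
  have lie_eq_zero : ⁅b (.inl (k, 1)), u⁆ = 0 := self_eq_neg.1 lie_eq_neg
  rw [h.lie_inl_one] at lie_eq_zero
  have coord_eq_zero (i : Fin 2) := congrArg (fun v => b.repr v (.inr i)) lie_eq_zero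
  exact ⟨by simpa using coord_eq_zero 1, by simpa using coord_eq_zero 0⟩

theorem holoGenerator_mem_adCommutant (h : IsWBasis b J) (o : Option ι) :
    holoGenerator b o ∈ adCommutant J := by
  intro v
  rcases o with _ | k
  · simp only [holoGenerator, ← lie_skew (b (.inr 0)), h.lie_inr, neg_zero, map_zero]
  · calc ⁅b (.inl (k, 0)), J v⁆ = -⁅b (.inl (k, 1)), v⁆ := by
          rw [← h.apply_zero, h.isAbelianComplexStructure.lie_apply, neg_neg]
      _ = J ⁅b (.inl (k, 0)), v⁆ := (h.apply_lie_inl_zero k v).symm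

theorem linearIndependent_holoGenerator (h : IsWBasis b J) :
    LinearIndependent ℝ (Sum.elim (holoGenerator b) (J ∘ holoGenerator b)) := by
  let index : Option ι ⊕ Option ι → (ι × Fin 4) ⊕ Fin 2 :=
    Sum.elim (fun o => o.elim (.inr 0) fun k => .inl (k, 0))
      (fun o => o.elim (.inr 1) fun k => .inl (k, 1))
  let sign : Option ι ⊕ Option ι → ℝˣ := Sum.elim 1 fun o => o.elim (-1) 1
  have index_injective : Function.Injective index := by
    rintro ((_ | k) | (_ | k)) ((_ | l) | (_ | l)) <;> simp [index]
  convert (b.linearIndependent.comp index index_injective).units_smul sign using 1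
  ext ((_ | k) | (_ | k)) <;>
    simp [index, sign, holoGenerator, h.apply_zero, h.apply_inr_zero]

theorem adCommutant_le_span_holoGenerator (h : IsWBasis b J) :
    adCommutant J ≤
      Submodule.span ℝ (Set.range (Sum.elim (holoGenerator b) (J ∘ holoGenerator b))) := by
  intro u hu
  have coord_two (k : ι) := (h.repr_eq_zero_of_mem_adCommutant hu k).1
  have coord_three (k : ι) := (h.repr_eq_zero_of_mem_adCommutant hu k).2
  set S := Submodule.span ℝ (Set.range (Sum.elim (holoGenerator b) (J ∘ holoGenerator b)))
  have left_mem (o) : holoGenerator b o ∈ S := Submodule.subset_span ⟨.inl o, rfl⟩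
  have right_mem (o) : J (holoGenerator b o) ∈ S := Submodule.subset_span ⟨.inr o, rfl⟩
  have b_one_mem (k : ι) : b (.inl (k, 1)) ∈ S := h.apply_zero k ▸ right_mem (some k)
  have b_inr_one_mem : b (.inr 1) ∈ S := by
    rw [← neg_neg (b (.inr 1)), ← h.apply_inr_zero]
    exact S.neg_mem (right_mem none)
  rw [← b.linearCombination_repr u, Finsupp.linearCombination_apply]
  refine Submodule.sum_mem _ ?_
  rintro (⟨k, i⟩ | i) -
  · fin_cases i
    · exact S.smul_mem _ (left_mem (some k))
    · exact S.smul_mem _ (b_one_mem k)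
    · simp [coord_two k]
    · simp [coord_three k]
  · fin_cases i
    · exact S.smul_mem _ (left_mem none)
    · exact S.smul_mem _ b_inr_one_mem

end IsWBasis

theorem IsWBasis.range_holoPart_holoGenerator {ι : Type*} {g : Type} [LieRing g] [LieAlgebra ℝ g]
    {b : Module.Basis ((ι × Fin 4) ⊕ Fin 2) ℝ g} {J : g →ₗ[ℝ] g} (h : IsWBasis b J) :
    Set.range (holoPart J ∘ holoGenerator b) =
      {antiholo g (b (.inr 0)) (b (.inr 1))} ∪
        Set.range fun k => holo g (b (.inl (k, 0))) (b (.inl (k, 1))) := by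
  rw [Option.range_eq, Set.insert_eq, antiholo_eq_holo_neg, ← h.apply_inr_zero]
  simp only [← h.apply_zero]
  rfl

end WAlgebra

theorem statement16_general {ι g : Type} [LieRing g] [LieAlgebra ℝ g]
    {b : Module.Basis ((ι × Fin 4) ⊕ Fin 2) ℝ g} {J : g →ₗ[ℝ] g} (h : IsWBasis b J) :
    holKer g J = Submodule.span ℂ
      ({antiholo g (b (.inr 0)) (b (.inr 1))} ∪
        Set.range fun k => holo g (b (.inl (k, 0))) (b (.inl (k, 1)))) ∧
    Module.rank ℂ (holKer g J) = Cardinal.mk ι + 1 := by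
  have hJ := h.isAbelianComplexStructure
  have holKer_eq : holKer g J = Submodule.span ℂ (Set.range (holoPart J ∘ holoGenerator b)) :=
    holKer_eq_span_holoPart hJ h.holoGenerator_mem_adCommutant h.adCommutant_le_span_holoGenerator
  have independent : LinearIndependent ℂ (holoPart J ∘ holoGenerator b) :=
    linearIndependent_holoPart_comp hJ.apply_apply h.linearIndependent_holoGenerator
  refine ⟨h.range_holoPart_holoGenerator ▸ holKer_eq, ?_⟩
  rw [holKer_eq, rank_span independent, Cardinal.mk_range_eq _ independent.injective,
    Cardinal.mk_option]

/-- For the Lie algebra `W_{4n+6}` with its abelian complex structure `J`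
(notation as in Statement 15), the space `{X ∈ g^{1,0} : π^{1,0}([X, Ȳ]) = 0 ∀ Ȳ ∈ g^{0,1}}`
of invariant holomorphic vector fields equals `span_ℂ{V, T_1, T_3, …, T_{2n+1}}` and has
dimension `n + 2`. -/
theorem statement16 (n : ℕ) (g : Type) [LieRing g] [LieAlgebra ℝ g]
    (X : Fin (n + 1) → Fin 4 → g) (Z1 Z2 : g)
    (b : Module.Basis ((Fin (n + 1) × Fin 4) ⊕ Fin 2) ℝ g)
    (hbX : ∀ k i, b (Sum.inl (k, i)) = X k i)
    (hbZ1 : b (Sum.inr 0) = Z1) (hbZ2 : b (Sum.inr 1) = Z2)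
    (h13 : ∀ k, ⁅X k 0, X k 2⁆ = -(1/2 : ℝ) • Z1)
    (h14 : ∀ k, ⁅X k 0, X k 3⁆ = -(1/2 : ℝ) • Z2)
    (h23 : ∀ k, ⁅X k 1, X k 2⁆ = -(1/2 : ℝ) • Z2)
    (h24 : ∀ k, ⁅X k 1, X k 3⁆ = (1/2 : ℝ) • Z1)
    (h12 : ∀ k, ⁅X k 0, X k 1⁆ = 0)
    (h34 : ∀ k, ⁅X k 2, X k 3⁆ = 0)
    (hcross : ∀ k l, k ≠ l → ∀ i i', ⁅X k i, X l i'⁆ = 0)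
    (hZ1c : ∀ k i, ⁅X k i, Z1⁆ = 0) (hZ2c : ∀ k i, ⁅X k i, Z2⁆ = 0)
    (hZZ : ⁅Z1, Z2⁆ = 0)
    (J : g →ₗ[ℝ] g)
    (hJ1 : ∀ k, J (X k 0) = X k 1) (hJ2' : ∀ k, J (X k 1) = -X k 0)
    (hJ3 : ∀ k, J (X k 2) = -X k 3) (hJ4 : ∀ k, J (X k 3) = X k 2)
    (hJZ1 : J Z1 = -Z2) (hJZ2 : J Z2 = Z1) :
    holKer g J = Submodule.span ℂ
      ({antiholo g Z1 Z2} ∪ (Set.range fun k => holo g (X k 0) (X k 1))) ∧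
    Module.finrank ℂ (holKer g J) = n + 2 := by
  obtain rfl : X = fun k i => b (.inl (k, i)) := funext₂ fun k i => (hbX k i).symm
  subst hbZ1 hbZ2
  obtain ⟨holKer_eq, rank_eq⟩ := statement16_general (b := b) (J := J)
    ⟨h13, h14, h23, h24, h12, h34, hcross, hZ1c, hZ2c, hZZ, hJ1, hJ2', hJ3, hJ4, hJZ1, hJZ2⟩
  exact ⟨holKer_eq, Module.finrank_eq_of_rank_eq (by rw [rank_eq, Cardinal.mk_fin]; norm_cast)⟩
end
end
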